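/- Let d ≥ 1 and k ≥ 2 be integers. There exists a constant C = C(k, d) such that for every x ∈ 𝕊^k and every t ≥ 0, Σ_{w ∈ 𝕊^k} p_t^ℓ(x,w) · Σ_{1 ≤ i < j ≤ k} 1{‖w_i − w_j‖ = 1} ≤ C / (√t + 1)^d. -/

import Mathlib

open scoped Classical

noncomputable section

namespace SSEPPaper

/-- Configurations of `k` labelled particles on `ℤ^d`. -/
abbrev Conf (d k : ℕ) := Fin k → Fin d → ℤ

/-- Euclidean norm of an integer vector in `ℤ^d`. -/
def vnorm {d : ℕ} (v : Fin d → ℤ) : ℝ := Real.sqrt (∑ j, ((v j : ℝ)) ^ 2)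

/-- Euclidean norm on `(ℝ^d)^k` of an integer configuration. -/
def cnorm {d k : ℕ} (x : Conf d k) : ℝ := Real.sqrt (∑ i, ∑ j, ((x i j : ℝ)) ^ 2)

/-- The set `𝕊^k` of configurations with pairwise distinct particle positions. -/
def SSet (d k : ℕ) : Set (Conf d k) := {x | ∀ i j : Fin k, i ≠ j → x i ≠ x j}

/-- Swap of the coordinates `i` and `j` of a configuration, i.e. `σ^{i,j}x`. -/
def cswap {d k : ℕ} (i j : Fin k) (x : Conf d k) : Conf d k := x ∘ Equiv.swap i j

/-- `δ^{i,j}w`: the configuration which agrees with `w` except that its `j`-th coordinate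
is replaced by `w i`. -/
def cdelta {d k : ℕ} (i j : Fin k) (w : Conf d k) : Conf d k := Function.update w j (w i)

/-- Kronecker delta function at `y`. -/
def deltaFn {α : Type*} (y : α) : α → ℝ := fun x => if x = y then 1 else 0

/-- Generator of the labelled exclusion process, extended to all of `(ℤ^d)^k`. -/
def Lexc {d k : ℕ} (f : Conf d k → ℝ) : Conf d k → ℝ := fun x =>
  (∑' y : Conf d k, if cnorm (y - x) = 1 ∧ y ∈ SSet d k then f y - f x else 0) +
    ∑ i : Fin k, ∑ j : Fin k,
      if i < j ∧ vnorm (x i - x j) = 1 ∧ x ∈ SSet d k then f (cswap i j x) - f x else 0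

/-- Generator of `k` independent simple random walks on `ℤ^d`. -/
def Lrw {d k : ℕ} (f : Conf d k → ℝ) : Conf d k → ℝ := fun x =>
  ∑' z : Conf d k, if cnorm (z - x) = 1 then f z - f x else 0

/-- Generator (discrete Laplacian) of a single simple random walk on `ℤ^d`. -/
def Lap {d : ℕ} (f : (Fin d → ℤ) → ℝ) : (Fin d → ℤ) → ℝ := fun x =>
  ∑' y : Fin d → ℤ, if vnorm (y - x) = 1 then f y - f x else 0

/-- Transition probabilities `p_t^ℓ(x,y) = (e^{tL^ℓ} δ_y)(x)` of the labelled exclusion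
process, given by the exponential power series of the generator. -/
def ptl {d k : ℕ} (t : ℝ) (x y : Conf d k) : ℝ :=
  ∑' n : ℕ, t ^ n / n.factorial * ((Lexc (d := d) (k := k))^[n] (deltaFn y)) x

/-- Transition probabilities `p_t^{rw}(x,y) = (e^{tL^{rw}} δ_y)(x)` of `k` independent
simple random walks on `ℤ^d`. -/
def ptrw {d k : ℕ} (t : ℝ) (x y : Conf d k) : ℝ :=
  ∑' n : ℕ, t ^ n / n.factorial * ((Lrw (d := d) (k := k))^[n] (deltaFn y)) x

/-- Transition probabilities `p_t(x,y) = (e^{tΔ} δ_y)(x)` of a single continuous-time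
simple random walk on `ℤ^d`. -/
def pt1 {d : ℕ} (t : ℝ) (x y : Fin d → ℤ) : ℝ :=
  ∑' n : ℕ, t ^ n / n.factorial * ((Lap (d := d))^[n] (deltaFn y)) x

/-- The configuration `e₁₁ = ((1,0,…,0),(0,…,0),…,(0,…,0))`. -/
def e11 (d k : ℕ) : Conf d k := fun i j => if i.val = 0 ∧ j.val = 0 then 1 else 0

/-!
The labelled exclusion process is the stirring process: each edge of `ℤ^d` swaps its endpoints at
rate one, a swap of two occupied sites being a label exchange. For two particles `i ≠ j` and an even
function `h` on `ℤ^d` with maximum at the origin, compare the generator `L` on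
`x ↦ h (x i - x j)` with the generator of two independent walks. They differ only on the edge
joining the two particles, when it exists, which the independent walks use to jump onto each other;
hence `L (h (x i - x j)) ≤ 2 (Δh) (x i - x j)` (Liggett's comparison inequality).

Take for `hₛ` the solution of `∂ₛ h = 2 Δh` whose initial value is the product over the coordinates
of `δ₀ + (δ₁ + δ₋₁) / 2`. Its Fourier transform is even and nonnegative, so `hₛ` is even with
maximum at the origin, and that maximum is at most `C / (√s + 1) ^ d`. By the inequality above,
`s ↦ e^{(t - s)L} hₛ (x i - x j)` is nondecreasing on `[0, t]`, so
`e^{tL} h₀ (x i - x j) ≤ hₜ 0 ≤ C / (√t + 1) ^ d`. Since `h₀ ≥ 0` equals `1 / 2` at the neighbours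
of the origin, `2 h₀ (x i - x j)` dominates the indicator that the two particles are adjacent.
-/

open scoped BoundedContinuousFunction

section Semigroup

variable {E : Type*} [NormedAddCommGroup E] [NormedSpace ℝ E]

/-- The operator semigroup `t ↦ e^{tA}` generated by the bounded operator `A`. -/
def semigroup (A : E →L[ℝ] E) (t : ℝ) : E →L[ℝ] E := NormedSpace.exp (t • A)

lemma semigroup_zero (A : E →L[ℝ] E) : semigroup A 0 = 1 := by simp [semigroup]

variable [CompleteSpace E]

lemma hasSum_semigroup_apply (A : E →L[ℝ] E) (t : ℝ) (f : E) :
    HasSum (fun n : ℕ => (t ^ n / n.factorial) • (A ^ n) f) (semigroup A t f) := by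
  have h := (NormedSpace.exp_series_hasSum_exp' (𝕂 := ℝ) (t • A)).mapL
    (ContinuousLinearMap.apply ℝ E f)
  simpa [semigroup, smul_pow, smul_smul, div_eq_inv_mul] using h

lemma semigroup_eq_exp_smul_semigroup_add (A : E →L[ℝ] E) (c t : ℝ) :
    semigroup A t = Real.exp (-(t * c)) • semigroup (A + c • 1) t := by
  let _ : NormedAlgebra ℚ (E →L[ℝ] E) := NormedAlgebra.restrictScalars ℚ ℝ _
  have hA : t • A = algebraMap ℝ (E →L[ℝ] E) (-(t * c)) + t • (A + c • 1) := by
    rw [Algebra.algebraMap_eq_smul_one]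
    module
  rw [semigroup, hA, NormedSpace.exp_add_of_commute (Algebra.commutes _ _),
    ← NormedSpace.algebraMap_exp_comm, ← Real.exp_eq_exp_ℝ, ← Algebra.smul_def, semigroup]

lemma hasDerivAt_semigroup (A : E →L[ℝ] E) (t : ℝ) :
    HasDerivAt (semigroup A) (semigroup A t * A) t :=
  hasDerivAt_exp_smul_const A t

variable [PartialOrder E] [IsOrderedAddMonoid E] {A : E →L[ℝ] E}

lemma semigroup_apply_nonneg [OrderClosedTopology E] [PosSMulMono ℝ E] {c : ℝ}
    (hA : ∀ f, 0 ≤ f → 0 ≤ A f + c • f) {t : ℝ} (ht : 0 ≤ t) {f : E} (hf : 0 ≤ f) :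
    0 ≤ semigroup A t f := by
  have hpow (n : ℕ) : 0 ≤ ((A + c • 1) ^ n) f := by
    induction n with
    | zero => simpa using hf
    | succ n ih => simpa [pow_succ'] using hA _ ih
  rw [semigroup_eq_exp_smul_semigroup_add A c]
  exact smul_nonneg (Real.exp_pos _).le
    ((hasSum_semigroup_apply (A + c • 1) t f).nonneg fun n => smul_nonneg (by positivity) (hpow n))

lemma semigroup_apply_le_of_hasDerivAt {ℓ : E →L[ℝ] ℝ}
    (hℓ : ∀ t, 0 ≤ t → ∀ f, 0 ≤ f → 0 ≤ ℓ (semigroup A t f)) {F F' : ℝ → E}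
    (hF : ∀ s, HasDerivAt F (F' s) s) (hle : ∀ s, A (F s) ≤ F' s) {t : ℝ} (ht : 0 ≤ t) :
    ℓ (semigroup A t (F 0)) ≤ ℓ (F t) := by
  let Φ (s : ℝ) : ℝ := ℓ (semigroup A (t - s) (F s))
  have hΦ (s : ℝ) : HasDerivAt Φ (ℓ (semigroup A (t - s) (F' s - A (F s)))) s := by
    have hsemi := (hasDerivAt_semigroup A (t - s)).scomp s ((hasDerivAt_id s).const_sub t)
    refine (ℓ.hasFDerivAt.comp_hasDerivAt s (hsemi.clm_apply (hF s))).congr_deriv ?_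
    simp only [neg_smul, one_smul, neg_apply, mul_apply_eq_comp, Function.comp_apply, map_add,
      map_neg, map_sub]
    ring
  have hmono : MonotoneOn Φ (Set.Icc 0 t) := by
    refine monotoneOn_of_deriv_nonneg (convex_Icc 0 t)
      (fun s _ => (hΦ s).continuousAt.continuousWithinAt)
      (fun s _ => (hΦ s).differentiableAt.differentiableWithinAt) fun s hs => ?_
    rw [interior_Icc] at hs
    rw [(hΦ s).deriv]
    exact hℓ _ (sub_nonneg.2 hs.2.le) _ (sub_nonneg.2 (hle s))
  simpa [Φ, semigroup_zero] using hmono (Set.left_mem_Icc.2 ht) (Set.right_mem_Icc.2 ht) ht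

end Semigroup

section Discrete

variable {α ε : Type*} [TopologicalSpace α]

instance : PosSMulMono ℝ (α →ᵇ ℝ) :=
  ⟨fun _ hc _ _ hfg x => mul_le_mul_of_nonneg_left (hfg x) hc⟩

lemma norm_sum_jump_le {T : α → Finset ε} (τ : ε → α → α) {R : ℕ} (hT : ∀ x, (T x).card ≤ R)
    (f : α →ᵇ ℝ) (x : α) : ‖∑ e ∈ T x, (f (τ e x) - f x)‖ ≤ R * 2 * ‖f‖ := by
  calc ‖∑ e ∈ T x, (f (τ e x) - f x)‖
      ≤ ∑ _e ∈ T x, (‖f‖ + ‖f‖) := norm_sum_le_of_le _ fun e _ =>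
        norm_sub_le_of_le (f.norm_coe_le_norm _) (f.norm_coe_le_norm _)
    _ = (T x).card * 2 * ‖f‖ := by rw [Finset.sum_const, nsmul_eq_mul]; ring
    _ ≤ R * 2 * ‖f‖ := by gcongr; exact hT x

variable [DiscreteTopology α]

/-- The indicator function of the point `w`, as a bounded function. -/
def pointMass (w : α) : α →ᵇ ℝ :=
  BoundedContinuousFunction.ofNormedAddCommGroupDiscrete (deltaFn w) 1 fun x => by
    unfold deltaFn; split_ifs <;> simp

lemma pointMass_apply (w x : α) : pointMass w x = if x = w then 1 else 0 := rfl

lemma pointMass_nonneg (w : α) : 0 ≤ pointMass w := fun x => by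
  change 0 ≤ ite _ _ _
  split_ifs <;> simp

lemma sum_smul_pointMass_le {g : α → ℝ} (hg : 0 ≤ g) {f : α →ᵇ ℝ} (hgf : g ≤ f)
    (u : Finset α) : ∑ w ∈ u, g w • pointMass w ≤ f := by
  intro x
  change (∑ w ∈ u, g w • pointMass w) x ≤ f x
  simp only [BoundedContinuousFunction.coe_sum, Finset.sum_apply,
    BoundedContinuousFunction.coe_smul, pointMass_apply, smul_eq_mul, mul_ite, mul_one, mul_zero,
    Finset.sum_ite_eq]
  split_ifs
  exacts [hgf x, (hg x).trans (hgf x)]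

lemma summable_and_tsum_pointMass_le {ℓ : (α →ᵇ ℝ) →L[ℝ] ℝ} (hℓ : ∀ f, 0 ≤ f → 0 ≤ ℓ f)
    {g : α → ℝ} (hg : 0 ≤ g) {f : α →ᵇ ℝ} (hgf : g ≤ f) :
    Summable (fun w => ℓ (pointMass w) * g w) ∧ ∑' w, ℓ (pointMass w) * g w ≤ ℓ f := by
  have hnonneg (w : α) : 0 ≤ ℓ (pointMass w) * g w :=
    mul_nonneg (hℓ _ (pointMass_nonneg w)) (hg w)
  have hsum (u : Finset α) : ∑ w ∈ u, ℓ (pointMass w) * g w ≤ ℓ f := by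
    have h := hℓ _ (sub_nonneg.2 (sum_smul_pointMass_le hg hgf u))
    simpa [mul_comm] using h
  exact ⟨summable_of_sum_le hnonneg hsum, Real.tsum_le_of_sum_le hnonneg hsum⟩

/-- The generator `f ↦ ∑ e ∈ T x, (f (τ e x) - f x)` of the jump process which leaves `x` for each
`τ e x`, `e ∈ T x`, at rate `1`; the bound `R` on the number of jumps makes it a bounded
operator. -/
def jumpGenerator (T : α → Finset ε) (τ : ε → α → α) (R : ℕ) (hT : ∀ x, (T x).card ≤ R) :
    (α →ᵇ ℝ) →L[ℝ] (α →ᵇ ℝ) :=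
  LinearMap.mkContinuous
    { toFun := fun f => .ofNormedAddCommGroupDiscrete (fun x => ∑ e ∈ T x, (f (τ e x) - f x))
        (R * 2 * ‖f‖) (norm_sum_jump_le τ hT f)
      map_add' := fun f g => by
        ext x
        simp only [BoundedContinuousFunction.coe_ofNormedAddCommGroupDiscrete,
          BoundedContinuousFunction.coe_add, Pi.add_apply, add_sub_add_comm,
          Finset.sum_add_distrib]
      map_smul' := fun c f => by
        ext x
        simp only [BoundedContinuousFunction.coe_ofNormedAddCommGroupDiscrete,
          BoundedContinuousFunction.coe_smul, smul_eq_mul, ← mul_sub, ← Finset.mul_sum,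
          RingHom.id_apply] }
    (R * 2) fun f =>
      BoundedContinuousFunction.norm_ofNormedAddCommGroup_le _ (by positivity)
        (norm_sum_jump_le τ hT f)

variable {T : α → Finset ε} {τ : ε → α → α} {R : ℕ} (hT : ∀ x, (T x).card ≤ R)

lemma jumpGenerator_add_smul_nonneg {f : α →ᵇ ℝ} (hf : 0 ≤ f) :
    0 ≤ jumpGenerator T τ R hT f + (R : ℝ) • f := by
  intro x
  have hf' (y : α) : 0 ≤ f y := hf y
  have hjump : -((T x).card * f x) ≤ ∑ e ∈ T x, (f (τ e x) - f x) := by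
    rw [Finset.sum_sub_distrib, Finset.sum_const, nsmul_eq_mul]
    linarith [Finset.sum_nonneg fun e (_ : e ∈ T x) => hf' (τ e x)]
  have hcard : (T x).card * f x ≤ R * f x :=
    mul_le_mul_of_nonneg_right (Nat.cast_le.2 (hT x)) (hf' x)
  change 0 ≤ ∑ e ∈ T x, (f (τ e x) - f x) + R * f x
  linarith

lemma semigroup_jumpGenerator_nonneg {t : ℝ} (ht : 0 ≤ t) {f : α →ᵇ ℝ} (hf : 0 ≤ f) :
    0 ≤ semigroup (jumpGenerator T τ R hT) t f :=
  semigroup_apply_nonneg (fun _ => jumpGenerator_add_smul_nonneg hT) ht hf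

end Discrete

section Stirring

variable {V ι : Type*}

/-- The transposition of the two endpoints of an edge: the stirring move along that edge. -/
def edgeSwap : Sym2 V → Equiv.Perm V := Sym2.lift ⟨Equiv.swap, Equiv.swap_comm⟩

lemma edgeSwap_mk (u v : V) : edgeSwap s(u, v) = Equiv.swap u v := rfl

lemma edgeSwap_apply_of_notMem {e : Sym2 V} {v : V} (hv : v ∉ e) : edgeSwap e v = v := by
  induction e with
  | _ a b =>
    rw [Sym2.mem_iff, not_or] at hv
    exact Equiv.swap_apply_of_ne_of_ne hv.1 hv.2

lemma edgeSwap_comp_eq_update [DecidableEq ι] {x : ι → V} (hx : x.Injective) (i : ι) {v : V}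
    (hv : v ∉ Set.range x) : edgeSwap s(x i, v) ∘ x = Function.update x i v := by
  funext j
  by_cases hj : j = i
  · simp [hj, edgeSwap_mk]
  · have hjv : x j ≠ v := fun h => hv ⟨j, h⟩
    simp [hj, edgeSwap_mk, Equiv.swap_apply_of_ne_of_ne (hx.ne hj) hjv]

lemma edgeSwap_comp_eq_comp_swap [DecidableEq ι] {x : ι → V} (hx : x.Injective) (i j : ι) :
    edgeSwap s(x i, x j) ∘ x = x ∘ Equiv.swap i j := by
  rw [edgeSwap_mk, hx.swap_comp]

variable {G : SimpleGraph V} [G.LocallyFinite]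

lemma sum_incidenceFinset (u : V) (g : Sym2 V → ℝ) :
    ∑ e ∈ G.incidenceFinset u, g e = ∑ v ∈ G.neighborFinset u, g s(u, v) := by
  have himage : G.incidenceFinset u = (G.neighborFinset u).image fun v => s(u, v) := by
    ext e
    induction e with
    | _ a b =>
      simp only [SimpleGraph.mem_incidenceFinset, SimpleGraph.mk'_mem_incidenceSet_iff,
        Finset.mem_image, SimpleGraph.mem_neighborFinset, Sym2.eq_iff]
      grind [SimpleGraph.adj_comm]
  rw [himage, Finset.sum_image fun v _ w _ h => Sym2.congr_right.1 h]

variable (G) in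
/-- The edges of `G` with at least one endpoint occupied by a particle of the configuration `x`. -/
def occupiedEdges [Fintype ι] (x : ι → V) : Finset (Sym2 V) :=
  Finset.univ.biUnion fun i => G.incidenceFinset (x i)

lemma mem_occupiedEdges [Fintype ι] {x : ι → V} {e : Sym2 V} :
    e ∈ occupiedEdges G x ↔ e ∈ G.edgeSet ∧ ∃ i, x i ∈ e := by
  simp [occupiedEdges, SimpleGraph.incidenceSet]

lemma card_occupiedEdges_le [Fintype ι] {D : ℕ} (hD : ∀ v, G.degree v ≤ D)
    (x : ι → V) : (occupiedEdges G x).card ≤ Fintype.card ι * D :=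
  Finset.card_biUnion_le_card_mul _ _ _ fun i _ =>
    (G.card_incidenceFinset_eq_degree (x i)).trans_le (hD _)

lemma sum_incidenceFinset_edgeSwap {u v : V} (huv : u ≠ v) (H : V → V → ℝ) :
    ∑ e ∈ G.incidenceFinset u, (H (edgeSwap e u) (edgeSwap e v) - H u v) =
      ∑ w ∈ G.neighborFinset u, (H w v - H u v) +
        if G.Adj u v then H v u - H v v else 0 := by
  have hterm (w : V) : H (edgeSwap s(u, w) u) (edgeSwap s(u, w) v) - H u v =
      (H w v - H u v) + if w = v then H v u - H v v else 0 := by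
    by_cases hw : w = v
    · simp [hw, edgeSwap_mk]
    · simp [hw, edgeSwap_mk, Equiv.swap_apply_of_ne_of_ne huv.symm (Ne.symm hw)]
  rw [sum_incidenceFinset, Finset.sum_congr rfl fun w _ => hterm w, Finset.sum_add_distrib,
    Finset.sum_ite_eq']
  simp only [SimpleGraph.mem_neighborFinset]

lemma sum_occupiedEdges_pair [Fintype ι] (x : ι → V) {i j : ι} (hij : x i ≠ x j) {H : V → V → ℝ}
    (hH : ∀ u v, H u v = H v u) :
    ∑ e ∈ occupiedEdges G x, (H (edgeSwap e (x i)) (edgeSwap e (x j)) - H (x i) (x j)) =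
      ∑ w ∈ G.neighborFinset (x i), (H w (x j) - H (x i) (x j)) +
        ∑ w ∈ G.neighborFinset (x j), (H (x i) w - H (x i) (x j)) +
          if G.Adj (x i) (x j) then 2 * H (x i) (x j) - H (x i) (x i) - H (x j) (x j) else 0 := by
  set u := x i
  set v := x j
  set g : Sym2 V → ℝ := fun e => H (edgeSwap e u) (edgeSwap e v) - H u v
  have hsubset : G.incidenceFinset u ∪ G.incidenceFinset v ⊆ occupiedEdges G x :=
    Finset.union_subset
      (Finset.subset_biUnion_of_mem (fun l => G.incidenceFinset (x l)) (Finset.mem_univ i))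
      (Finset.subset_biUnion_of_mem (fun l => G.incidenceFinset (x l)) (Finset.mem_univ j))
  have hfixed : ∀ e ∈ occupiedEdges G x, e ∉ G.incidenceFinset u ∪ G.incidenceFinset v →
      g e = 0 := by
    intro e he heuv
    have hedge := (mem_occupiedEdges.1 he).1
    simp only [Finset.mem_union, SimpleGraph.mem_incidenceFinset, SimpleGraph.incidenceSet,
      Set.mem_sep_iff, hedge, true_and, not_or] at heuv
    simp [g, edgeSwap_apply_of_notMem heuv.1, edgeSwap_apply_of_notMem heuv.2]
  have hinter : ∑ e ∈ G.incidenceFinset u ∩ G.incidenceFinset v, g e = 0 := by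
    refine Finset.sum_eq_zero fun e he => ?_
    have he' : e = s(u, v) := G.incidenceSet_inter_incidenceSet_subset hij (by simpa using he)
    simp [g, he', edgeSwap_mk, hH u v]
  have hunion : ∑ e ∈ G.incidenceFinset u ∪ G.incidenceFinset v, g e =
      ∑ e ∈ G.incidenceFinset u, g e + ∑ e ∈ G.incidenceFinset v, g e := by
    rw [← Finset.sum_union_inter, hinter, add_zero]
  rw [← Finset.sum_subset hsubset hfixed, hunion, sum_incidenceFinset_edgeSwap hij H,
    sum_incidenceFinset_edgeSwap hij.symm fun a b => H b a, G.adj_comm v u]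
  split_ifs
  · rw [hH v u]; ring
  · ring

/-- The moves `(i, v)` of a particle `i` of the configuration `x` to a vacant neighbour `v`. -/
def vacantMoves (G : SimpleGraph V) [G.LocallyFinite] [Fintype ι] (x : ι → V) :
    Finset (Σ _ : ι, V) :=
  Finset.univ.sigma fun i => (G.neighborFinset (x i)).filter (· ∉ Set.range x)

/-- The pairs `i < j` of particles of the configuration `x` sitting at adjacent vertices. -/
def adjacentPairs (G : SimpleGraph V) [Fintype ι] [LinearOrder ι] (x : ι → V) : Finset (ι × ι) :=
  Finset.univ.filter fun p => p.1 < p.2 ∧ G.Adj (x p.1) (x p.2)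

lemma mem_vacantMoves [Fintype ι] {x : ι → V} {p : Σ _ : ι, V} :
    p ∈ vacantMoves G x ↔ G.Adj (x p.1) p.2 ∧ p.2 ∉ Set.range x := by
  simp [vacantMoves]

lemma sum_occupiedEdges_filter_vacant [Fintype ι] {x : ι → V} (hx : x.Injective)
    (g : Sym2 V → ℝ) :
    ∑ e ∈ (occupiedEdges G x).filter (fun e => ∃ v ∈ e, v ∉ Set.range x), g e =
      ∑ p ∈ vacantMoves G x, g s(x p.1, p.2) := by
  refine (Finset.sum_nbij (fun p : Σ _ : ι, V => s(x p.1, p.2)) ?_ ?_ ?_ fun _ _ => rfl).symm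
  · rintro ⟨i, v⟩ hp
    obtain ⟨hadj, hv⟩ := mem_vacantMoves.1 hp
    exact Finset.mem_filter.2 ⟨mem_occupiedEdges.2 ⟨hadj, i, by simp⟩, v, by simp, hv⟩
  · rintro ⟨i, v⟩ hp ⟨j, w⟩ hq h
    have hv := (mem_vacantMoves.1 hp).2
    rcases Sym2.eq_iff.1 h with ⟨hij, rfl⟩ | ⟨-, hvj⟩
    · obtain rfl := hx hij
      rfl
    · exact absurd ⟨j, hvj.symm⟩ hv
  · intro e he
    obtain ⟨he, v, hve, hv⟩ := Finset.mem_filter.1 he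
    obtain ⟨hadj, i, hi⟩ := mem_occupiedEdges.1 he
    have hne : x i ≠ v := fun h => hv ⟨i, h⟩
    obtain rfl : e = s(x i, v) := (Sym2.mem_and_mem_iff hne).1 ⟨hi, hve⟩
    exact ⟨⟨i, v⟩, mem_vacantMoves.2 ⟨hadj, hv⟩, rfl⟩

lemma sum_occupiedEdges_filter_not_vacant [Fintype ι] [LinearOrder ι] {x : ι → V}
    (hx : x.Injective) (g : Sym2 V → ℝ) :
    ∑ e ∈ (occupiedEdges G x).filter (fun e => ¬ ∃ v ∈ e, v ∉ Set.range x), g e =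
      ∑ p ∈ adjacentPairs G x, g s(x p.1, x p.2) := by
  refine (Finset.sum_nbij (fun p : ι × ι => s(x p.1, x p.2)) ?_ ?_ ?_ fun _ _ => rfl).symm
  · rintro ⟨i, j⟩ hp
    have hadj := (Finset.mem_filter.1 hp).2.2
    exact Finset.mem_filter.2 ⟨mem_occupiedEdges.2 ⟨hadj, i, by simp⟩, by simp⟩
  · rintro ⟨i, j⟩ hp ⟨i', j'⟩ hq h
    have hij : i < j := (Finset.mem_filter.1 hp).2.1
    have hij' : i' < j' := (Finset.mem_filter.1 hq).2.1
    rcases Sym2.eq_iff.1 h with ⟨h₁, h₂⟩ | ⟨h₁, h₂⟩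
    · exact Prod.ext (hx h₁) (hx h₂)
    · obtain ⟨rfl, rfl⟩ : i = j' ∧ j = i' := ⟨hx h₁, hx h₂⟩
      exact absurd hij hij'.asymm
  · intro e he
    obtain ⟨he, hocc⟩ := Finset.mem_filter.1 he
    have hadj := (mem_occupiedEdges.1 he).1
    push Not at hocc
    induction e with
    | _ a b =>
      obtain ⟨i, rfl⟩ := hocc a (Sym2.mem_mk_left a b)
      obtain ⟨j, rfl⟩ := hocc b (Sym2.mem_mk_right _ b)
      have hadj : G.Adj (x i) (x j) := hadj
      rcases lt_or_gt_of_ne fun h : i = j => hadj.ne (congrArg x h) with hij | hji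
      · exact ⟨(i, j), by simp [adjacentPairs, hij, hadj], rfl⟩
      · exact ⟨(j, i), by simp [adjacentPairs, hji, hadj.symm], Sym2.eq_swap⟩

lemma sum_occupiedEdges_edgeSwap_comp [Fintype ι] [LinearOrder ι] {x : ι → V} (hx : x.Injective)
    (f : (ι → V) → ℝ) :
    ∑ e ∈ occupiedEdges G x, (f (edgeSwap e ∘ x) - f x) =
      ∑ p ∈ vacantMoves G x, (f (Function.update x p.1 p.2) - f x) +
        ∑ p ∈ adjacentPairs G x, (f (x ∘ Equiv.swap p.1 p.2) - f x) := by
  rw [← Finset.sum_filter_add_sum_filter_not _ fun e => ∃ v ∈ e, v ∉ Set.range x,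
    sum_occupiedEdges_filter_vacant hx, sum_occupiedEdges_filter_not_vacant hx]
  congr 1
  · exact Finset.sum_congr rfl fun p hp => by
      rw [edgeSwap_comp_eq_update hx p.1 (mem_vacantMoves.1 hp).2]
  · exact Finset.sum_congr rfl fun p _ => by rw [edgeSwap_comp_eq_comp_swap hx]

end Stirring

section Lattice

variable {d k : ℕ}

lemma vnorm_sub_comm (u v : Fin d → ℤ) : vnorm (u - v) = vnorm (v - u) := by
  simp only [vnorm, Pi.sub_apply, Int.cast_sub, sub_sq_comm]

/-- The nearest-neighbour graph of `ℤ^d`. -/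
def latticeGraph (d : ℕ) : SimpleGraph (Fin d → ℤ) where
  Adj u v := vnorm (u - v) = 1
  symm := ⟨fun u v h => (vnorm_sub_comm v u).trans h⟩
  loopless := ⟨fun u h => by simp [vnorm] at h⟩

/-- The vector `± e_l`, for `a = (l, ±1)`. -/
def unitStep {ι : Type*} (a : ι × ℤˣ) : ι → ℤ := Pi.single a.1 (a.2 : ℤ)

lemma sum_sq_eq_one_iff {ι : Type*} [Fintype ι] {v : ι → ℤ} :
    ∑ i, (v i : ℝ) ^ 2 = 1 ↔ ∃ a, v = unitStep a := by
  constructor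
  · intro h
    have hsum : ∑ i, v i ^ 2 = 1 := by exact_mod_cast h
    obtain ⟨i, -, hi⟩ := Finset.exists_ne_zero_of_sum_ne_zero (hsum.trans_ne one_ne_zero)
    have hsplit := Finset.add_sum_erase Finset.univ (fun j => v j ^ 2) (Finset.mem_univ i)
    have hrest_nonneg : 0 ≤ ∑ j ∈ Finset.univ.erase i, v j ^ 2 :=
      Finset.sum_nonneg fun j _ => sq_nonneg (v j)
    have hi_pos : 0 < v i ^ 2 := (sq_nonneg _).lt_of_ne' hi
    have hi_one : v i ^ 2 = 1 := by omega
    have hrest : ∑ j ∈ Finset.univ.erase i, v j ^ 2 = 0 := by omega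
    obtain ⟨ε, hε⟩ := IsUnit.of_pow_eq_one hi_one two_ne_zero
    refine ⟨(i, ε), funext fun j => ?_⟩
    by_cases hj : j = i
    · simp [unitStep, hj, hε]
    · have := (Finset.sum_eq_zero_iff_of_nonneg fun j _ => sq_nonneg (v j)).1 hrest j (by simp [hj])
      simpa [unitStep, hj] using this
  · rintro ⟨⟨i, ε⟩, rfl⟩
    rw [Finset.sum_eq_single i (fun j _ hj => by simp [unitStep, hj]) (by simp)]
    rcases Int.units_eq_one_or ε with rfl | rfl <;> simp [unitStep]

lemma latticeGraph_adj_iff {u v : Fin d → ℤ} :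
    (latticeGraph d).Adj u v ↔ ∃ a, v = u + unitStep a := by
  change vnorm (u - v) = 1 ↔ _
  rw [vnorm_sub_comm, vnorm, Real.sqrt_eq_one, sum_sq_eq_one_iff]
  simp only [sub_eq_iff_eq_add']

lemma unitStep_neg {ι : Type*} (i : ι) (ε : ℤˣ) : unitStep (i, -ε) = -unitStep (i, ε) := by
  simp [unitStep, Pi.single_neg]

lemma unitStep_injective {ι : Type*} : Function.Injective (unitStep (ι := ι)) := by
  rintro ⟨i, ε⟩ ⟨j, η⟩ h
  obtain rfl : i = j := by
    by_contra hij
    have := congrFun h i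
    simp [unitStep, hij] at this
  simpa [unitStep, Units.ext_iff] using h

instance : (latticeGraph d).LocallyFinite := fun u =>
  Fintype.ofFinset (Finset.univ.image fun a => u + unitStep a) fun v => by
    simp [latticeGraph_adj_iff, eq_comm]

lemma sum_neighborFinset_latticeGraph (u : Fin d → ℤ) (g : (Fin d → ℤ) → ℝ) :
    ∑ v ∈ (latticeGraph d).neighborFinset u, g v = ∑ a, g (u + unitStep a) := by
  have himage : (latticeGraph d).neighborFinset u = Finset.univ.image fun a => u + unitStep a := by
    ext v
    simp [latticeGraph_adj_iff, eq_comm]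
  rw [himage, Finset.sum_image fun a _ b _ h => unitStep_injective (add_left_cancel h)]

lemma degree_latticeGraph (u : Fin d → ℤ) : (latticeGraph d).degree u = d * 2 := by
  have h := sum_neighborFinset_latticeGraph u fun _ => 1
  simpa [← @Nat.cast_inj ℝ] using h

lemma sum_add_unitStep_eq_sum_sub_unitStep (g : (Fin d → ℤ) → ℝ) (z : Fin d → ℤ) :
    ∑ a, g (z + unitStep a) = ∑ a, g (z - unitStep a) :=
  (Fintype.sum_equiv (Equiv.prodCongr (Equiv.refl _) (Equiv.neg ℤˣ)) _ _ fun a => by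
    rw [sub_eq_add_neg, ← unitStep_neg]; rfl).symm

/-- The discrete Laplacian on `ℤ^d`. -/
def latticeLaplacian (d : ℕ) : ((Fin d → ℤ) →ᵇ ℝ) →L[ℝ] ((Fin d → ℤ) →ᵇ ℝ) :=
  jumpGenerator (fun _ => (Finset.univ : Finset (Fin d × ℤˣ))) (fun a z => z + unitStep a) (d * 2)
    fun _ => by simp

lemma latticeLaplacian_apply (f : (Fin d → ℤ) →ᵇ ℝ) (z : Fin d → ℤ) :
    latticeLaplacian d f z = ∑ a, (f (z + unitStep a) - f z) := rfl

lemma cnorm_sub_eq_one_iff {x y : Conf d k} :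
    cnorm (y - x) = 1 ↔ ∃ i v, (latticeGraph d).Adj (x i) v ∧ y = Function.update x i v := by
  have hsum : ∑ i, ∑ j, (((y - x) i j : ℤ) : ℝ) ^ 2 =
      ∑ p, ((Function.uncurry (y - x) p : ℤ) : ℝ) ^ 2 := by
    rw [Fintype.sum_prod_type]; rfl
  have huncurry (i : Fin k) (l : Fin d) (ε : ℤˣ) : unitStep ((i, l), ε) =
      Function.uncurry (Pi.single i (unitStep (l, ε))) := by
    ext ⟨i', l'⟩
    by_cases hi : i' = i
    · subst hi; simp [unitStep, Pi.single_apply]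
    · simp [unitStep, hi]
  have hupdate (i : Fin k) (w : Fin d → ℤ) :
      x + Pi.single i w = Function.update x i (x i + w) := by
    ext1 j
    by_cases hj : j = i
    · subst hj; simp
    · simp [hj]
  rw [cnorm, Real.sqrt_eq_one, hsum, sum_sq_eq_one_iff]
  simp only [Prod.exists, huncurry, Function.uncurry_injective.eq_iff, sub_eq_iff_eq_add', hupdate,
    latticeGraph_adj_iff]
  aesop

end Lattice

section Exclusion

variable {d k : ℕ}

lemma mem_SSet_iff_injective {x : Conf d k} : x ∈ SSet d k ↔ x.Injective :=
  forall₂_congr fun _ _ => not_imp_not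

lemma edgeSwap_comp_mem_SSet {x : Conf d k} (hx : x ∈ SSet d k) (e : Sym2 (Fin d → ℤ)) :
    edgeSwap e ∘ x ∈ SSet d k :=
  mem_SSet_iff_injective.2 ((edgeSwap e).injective.comp (mem_SSet_iff_injective.1 hx))

lemma cnorm_sub_eq_one_and_mem_SSet_iff {x y : Conf d k} (hx : x ∈ SSet d k) :
    cnorm (y - x) = 1 ∧ y ∈ SSet d k ↔
      ∃ p ∈ vacantMoves (latticeGraph d) x, Function.update x p.1 p.2 = y := by
  have hinj := mem_SSet_iff_injective.1 hx
  constructor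
  · rintro ⟨hy, hyS⟩
    obtain ⟨i, v, hadj, rfl⟩ := cnorm_sub_eq_one_iff.1 hy
    refine ⟨⟨i, v⟩, mem_vacantMoves.2 ⟨hadj, ?_⟩, rfl⟩
    rintro ⟨j, rfl⟩
    have hji : j ≠ i := by rintro rfl; exact hadj.ne rfl
    exact hyS i j hji.symm (by simp [hji])
  · rintro ⟨⟨i, v⟩, hp, rfl⟩
    obtain ⟨hadj, hv⟩ := mem_vacantMoves.1 hp
    refine ⟨cnorm_sub_eq_one_iff.2 ⟨i, v, hadj, rfl⟩, ?_⟩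
    rw [← edgeSwap_comp_eq_update hinj i hv]
    exact edgeSwap_comp_mem_SSet hx _

lemma injOn_update_vacantMoves (x : Conf d k) :
    Set.InjOn (fun p : Σ _ : Fin k, Fin d → ℤ => Function.update x p.1 p.2)
      (vacantMoves (latticeGraph d) x) := by
  rintro ⟨i, v⟩ hp ⟨j, w⟩ - h
  have hv := (mem_vacantMoves.1 hp).2
  have hi : v = Function.update x j w i := by simpa using congrFun h i
  obtain rfl : i = j := by
    by_contra hij
    exact hv ⟨i, by rw [hi, Function.update_of_ne hij]⟩
  simpa using hi

lemma Lexc_apply_eq_sum_occupiedEdges (f : Conf d k → ℝ) {x : Conf d k} (hx : x ∈ SSet d k) :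
    Lexc f x = ∑ e ∈ occupiedEdges (latticeGraph d) x, (f (edgeSwap e ∘ x) - f x) := by
  rw [sum_occupiedEdges_edgeSwap_comp (mem_SSet_iff_injective.1 hx), Lexc]
  congr 1
  · rw [← Finset.sum_image (f := fun y => f y - f x) (injOn_update_vacantMoves x)]
    refine (tsum_eq_sum fun y hy => ?_).trans (Finset.sum_congr rfl fun y hy => ?_)
    · rw [Finset.mem_image, ← cnorm_sub_eq_one_and_mem_SSet_iff hx] at hy
      exact if_neg hy
    · rw [Finset.mem_image, ← cnorm_sub_eq_one_and_mem_SSet_iff hx] at hy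
      exact if_pos hy
  · rw [adjacentPairs, Finset.sum_filter, Fintype.sum_prod_type]
    simp only [hx, and_true]
    rfl

/-- The generator of the exclusion process as a bounded operator, in its stirring form: each edge
touching a particle swaps its two endpoints at rate `1`. -/
def exclusionGenerator (d k : ℕ) : (SSet d k →ᵇ ℝ) →L[ℝ] (SSet d k →ᵇ ℝ) :=
  jumpGenerator (fun x => occupiedEdges (latticeGraph d) x.1)
    (fun e x => ⟨edgeSwap e ∘ x.1, edgeSwap_comp_mem_SSet x.2 e⟩) (k * (d * 2)) fun x => by
      simpa using card_occupiedEdges_le (fun v => (degree_latticeGraph v).le) x.1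

lemma exclusionGenerator_apply_eq_Lexc {f : SSet d k →ᵇ ℝ} {g : Conf d k → ℝ}
    (hfg : ∀ x : SSet d k, f x = g x) (x : SSet d k) : exclusionGenerator d k f x = Lexc g x := by
  rw [Lexc_apply_eq_sum_occupiedEdges g x.2]
  exact Finset.sum_congr rfl fun e _ => by rw [hfg, hfg]

lemma exclusionGenerator_pow_apply_eq_iterate_Lexc {f : SSet d k →ᵇ ℝ} {g : Conf d k → ℝ}
    (hfg : ∀ x : SSet d k, f x = g x) (n : ℕ) (x : SSet d k) :
    (exclusionGenerator d k ^ n) f x = Lexc^[n] g x := by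
  induction n generalizing x with
  | zero => exact hfg x
  | succ n ih =>
    rw [pow_succ', Function.iterate_succ_apply']
    exact exclusionGenerator_apply_eq_Lexc ih x

lemma ptl_eq_semigroup_apply (t : ℝ) (x w : SSet d k) :
    ptl t x.1 w.1 = semigroup (exclusionGenerator d k) t (pointMass w) x := by
  have hsum := (hasSum_semigroup_apply (exclusionGenerator d k) t (pointMass w)).mapL
    (BoundedContinuousFunction.evalCLM ℝ x)
  have hpointMass (y : SSet d k) : pointMass w y = deltaFn w.1 y.1 := by
    simp [pointMass_apply, deltaFn, Subtype.ext_iff]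
  rw [ptl, ← BoundedContinuousFunction.evalCLM_apply ℝ, ← hsum.tsum_eq]
  refine tsum_congr fun n => ?_
  rw [map_smul, BoundedContinuousFunction.evalCLM_apply,
    exclusionGenerator_pow_apply_eq_iterate_Lexc hpointMass, smul_eq_mul]

lemma semigroup_exclusionGenerator_nonneg {t : ℝ} (ht : 0 ≤ t) {f : SSet d k →ᵇ ℝ} (hf : 0 ≤ f) :
    0 ≤ semigroup (exclusionGenerator d k) t f :=
  semigroup_jumpGenerator_nonneg _ ht hf

end Exclusion

section CosineCoefficients

open Real

/-- The cosine, as a bounded continuous function. -/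
def boundedCos : ℝ →ᵇ ℝ :=
  .ofNormedAddCommGroup cos continuous_cos 1 abs_cos_le_one

lemma norm_integral_mul_cos_le (f : ℝ →ᵇ ℝ) (z : ℤ) :
    ‖(2 * π)⁻¹ * ∫ θ in -π..π, f θ * cos (z * θ)‖ ≤ 1 * ‖f‖ := by
  have hpi := pi_pos
  have hint : ‖∫ θ in -π..π, f θ * cos (z * θ)‖ ≤ ‖f‖ * |π - -π| :=
    intervalIntegral.norm_integral_le_of_norm_le_const fun θ _ => by
      rw [norm_mul]
      exact (mul_le_mul (f.norm_coe_le_norm θ) (abs_cos_le_one _) (abs_nonneg _)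
        (norm_nonneg f)).trans_eq (mul_one _)
  rw [norm_mul, norm_of_nonneg (by positivity)]
  calc (2 * π)⁻¹ * ‖∫ θ in -π..π, f θ * cos (z * θ)‖ ≤ (2 * π)⁻¹ * (‖f‖ * |π - -π|) := by gcongr
    _ = 1 * ‖f‖ := by rw [abs_of_pos (by linarith)]; field_simp; ring

lemma intervalIntegrable_mul_cos (f : ℝ →ᵇ ℝ) (z : ℤ) :
    IntervalIntegrable (fun θ => f θ * cos (z * θ)) MeasureTheory.volume (-π) π :=
  Continuous.intervalIntegrable (by fun_prop) _ _

/-- The cosine coefficients `z ↦ (2π)⁻¹ ∫ f(θ) cos(zθ) dθ` over `[-π, π]` of a bounded continuous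
function. -/
def cosCoeff : (ℝ →ᵇ ℝ) →L[ℝ] (ℤ →ᵇ ℝ) :=
  LinearMap.mkContinuous
    { toFun := fun f => .ofNormedAddCommGroupDiscrete
        (fun z => (2 * π)⁻¹ * ∫ θ in -π..π, f θ * cos (z * θ)) (1 * ‖f‖)
        (norm_integral_mul_cos_le f)
      map_add' := fun f g => by
        ext z
        simp only [BoundedContinuousFunction.coe_ofNormedAddCommGroupDiscrete,
          BoundedContinuousFunction.coe_add, Pi.add_apply, add_mul]
        rw [intervalIntegral.integral_add (intervalIntegrable_mul_cos f z)
          (intervalIntegrable_mul_cos g z), mul_add]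
      map_smul' := fun c f => by
        ext z
        simp [mul_assoc, mul_left_comm] }
    1 fun f => BoundedContinuousFunction.norm_ofNormedAddCommGroup_le _ (by positivity)
      (norm_integral_mul_cos_le f)

lemma cosCoeff_apply (f : ℝ →ᵇ ℝ) (z : ℤ) :
    cosCoeff f z = (2 * π)⁻¹ * ∫ θ in -π..π, f θ * cos (z * θ) := rfl

lemma cosCoeff_neg (f : ℝ →ᵇ ℝ) (z : ℤ) : cosCoeff f (-z) = cosCoeff f z := by
  simp [cosCoeff_apply]

lemma cosCoeff_one (z : ℤ) : cosCoeff 1 z = if z = 0 then 1 else 0 := by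
  split_ifs with hz
  · have hint : ∫ θ in -π..π, (1 : ℝ →ᵇ ℝ) θ * cos (z * θ) = 2 * π := by
      simp [hz, two_mul]
    rw [cosCoeff_apply, hint, inv_mul_cancel₀ two_pi_pos.ne']
  · have hz' : (z : ℝ) ≠ 0 := Int.cast_ne_zero.2 hz
    simp [cosCoeff_apply, intervalIntegral.integral_comp_mul_left (fun θ => cos θ) hz',
      sin_int_mul_pi]

lemma cosCoeff_boundedCos_mul (f : ℝ →ᵇ ℝ) (z : ℤ) :
    cosCoeff (boundedCos * f) z = (cosCoeff f (z + 1) + cosCoeff f (z - 1)) / 2 := by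
  have hprod (θ : ℝ) : cos θ * f θ * cos (z * θ) =
      2⁻¹ * (f θ * cos ((z + 1 : ℤ) * θ) + f θ * cos ((z - 1 : ℤ) * θ)) := by
    push_cast
    rw [add_one_mul, sub_one_mul, cos_add, cos_sub]
    ring
  have hint : ∫ θ in -π..π, (boundedCos * f) θ * cos (z * θ) =
      2⁻¹ * (∫ θ in -π..π, f θ * cos ((z + 1 : ℤ) * θ)) +
        2⁻¹ * ∫ θ in -π..π, f θ * cos ((z - 1 : ℤ) * θ) := by
    rw [← mul_add, ← intervalIntegral.integral_add (intervalIntegrable_mul_cos f _)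
      (intervalIntegrable_mul_cos f _), ← intervalIntegral.integral_const_mul]
    exact intervalIntegral.integral_congr fun θ _ => hprod θ
  rw [cosCoeff_apply, hint, cosCoeff_apply, cosCoeff_apply]
  ring

lemma cosCoeff_apply_zero_le_integral {f : ℝ →ᵇ ℝ} {g : ℝ → ℝ} (hg : Continuous g)
    (hfg : ∀ θ ∈ Set.Icc (-π) π, f θ ≤ g θ) :
    cosCoeff f 0 ≤ (2 * π)⁻¹ * ∫ θ in -π..π, g θ := by
  have hpi := pi_pos
  rw [cosCoeff_apply]
  gcongr
  refine intervalIntegral.integral_mono_on (by linarith) (intervalIntegrable_mul_cos f 0)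
    (hg.intervalIntegrable _ _) fun θ hθ => ?_
  simpa using hfg θ hθ

lemma cosCoeff_apply_zero_mono {f g : ℝ →ᵇ ℝ} (hfg : f ≤ g) : cosCoeff f 0 ≤ cosCoeff g 0 := by
  simpa [cosCoeff_apply] using cosCoeff_apply_zero_le_integral g.continuous fun θ _ => hfg θ

lemma abs_cosCoeff_le_apply_zero {f : ℝ →ᵇ ℝ} (hf : 0 ≤ f) (z : ℤ) :
    |cosCoeff f z| ≤ cosCoeff f 0 := by
  have hpi := pi_pos
  rw [cosCoeff_apply, cosCoeff_apply, abs_mul, abs_of_pos (by positivity)]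
  gcongr
  refine (intervalIntegral.abs_integral_le_integral_abs (by linarith)).trans ?_
  refine intervalIntegral.integral_mono_on (by linarith) (intervalIntegrable_mul_cos f z).abs
    (intervalIntegrable_mul_cos f 0) fun θ _ => ?_
  rw [abs_mul, abs_of_nonneg (show 0 ≤ f θ from hf θ), Int.cast_zero, zero_mul, cos_zero]
  exact mul_le_mul_of_nonneg_left (abs_cos_le_one _) (hf θ)

end CosineCoefficients

section HeatKernel

open Real

lemma exp_boundedContinuousFunction_apply {α : Type*} [TopologicalSpace α] (f : α →ᵇ ℝ) (x : α) :
    NormedSpace.exp f x = exp (f x) := by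
  let eval : (α →ᵇ ℝ) →+* ℝ :=
    { toFun := fun f => f x
      map_one' := rfl
      map_mul' := fun _ _ => rfl
      map_zero' := rfl
      map_add' := fun _ _ => rfl }
  let _ : NormedAlgebra ℚ (α →ᵇ ℝ) := NormedAlgebra.restrictScalars ℚ ℝ _
  rw [exp_eq_exp_ℝ]
  exact NormedSpace.map_exp eval (BoundedContinuousFunction.evalCLM ℝ x).continuous f

/-- The Fourier transform of `heatKernel s`. -/
def heatSymbol (s : ℝ) : ℝ →ᵇ ℝ :=
  NormedSpace.exp (s • (4 : ℝ) • (boundedCos - 1)) * (1 + boundedCos)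

lemma heatSymbol_apply (s θ : ℝ) :
    heatSymbol s θ = exp (s * (4 * (cos θ - 1))) * (1 + cos θ) := by
  simp [heatSymbol, exp_boundedContinuousFunction_apply, boundedCos]

lemma heatSymbol_zero : heatSymbol 0 = 1 + boundedCos := by simp [heatSymbol]

lemma heatSymbol_nonneg (s : ℝ) : 0 ≤ heatSymbol s := fun θ => by
  change 0 ≤ heatSymbol s θ
  rw [heatSymbol_apply]
  exact mul_nonneg (exp_pos _).le (by linarith [neg_one_le_cos θ])

lemma heatSymbol_le_heatSymbol_zero {s : ℝ} (hs : 0 ≤ s) :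
    heatSymbol s ≤ heatSymbol 0 := fun θ => by
  change heatSymbol s θ ≤ heatSymbol 0 θ
  rw [heatSymbol_apply, heatSymbol_apply]
  have hcos : s * (4 * (cos θ - 1)) ≤ 0 * (4 * (cos θ - 1)) := by nlinarith [cos_le_one θ]
  exact mul_le_mul_of_nonneg_right (exp_le_exp.2 hcos) (by linarith [neg_one_le_cos θ])

lemma heatSymbol_le_gaussian {s θ : ℝ} (hs : 0 ≤ s) (hθ : θ ∈ Set.Icc (-π) π) :
    heatSymbol s θ ≤ 2 * exp (-(8 * s / π ^ 2) * θ ^ 2) := by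
  have hcos : s * (4 * (cos θ - 1)) ≤ -(8 * s / π ^ 2) * θ ^ 2 := by
    calc s * (4 * (cos θ - 1)) ≤ s * (4 * (-(2 / π ^ 2 * θ ^ 2))) := by
          gcongr
          linarith [cos_le_one_sub_mul_cos_sq (abs_le.2 hθ)]
      _ = -(8 * s / π ^ 2) * θ ^ 2 := by ring
  rw [heatSymbol_apply, mul_comm 2]
  exact mul_le_mul (exp_le_exp.2 hcos) (by linarith [cos_le_one θ])
    (by linarith [neg_one_le_cos θ]) (exp_pos _).le

lemma hasDerivAt_heatSymbol (s : ℝ) :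
    HasDerivAt heatSymbol ((4 : ℝ) • (boundedCos * heatSymbol s - heatSymbol s)) s := by
  refine ((hasDerivAt_exp_smul_const' ((4 : ℝ) • (boundedCos - 1) : ℝ →ᵇ ℝ) s).mul_const
    (1 + boundedCos)).congr_deriv ?_
  rw [mul_assoc, ← heatSymbol, smul_mul_assoc, sub_mul, one_mul]

/-- The solution `φ` of the heat equation `∂ₛ φ = 2 Δφ` on `ℤ` with `φ₀ = δ₀ + (δ₁ + δ₋₁) / 2`. This
initial value is positive at the neighbours of the origin, and has a nonnegative Fourier transform,
so that `φₛ` keeps its maximum at the origin. -/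
def heatKernel (s : ℝ) : ℤ →ᵇ ℝ := cosCoeff (heatSymbol s)

lemma heatKernel_neg (s : ℝ) (z : ℤ) : heatKernel s (-z) = heatKernel s z := cosCoeff_neg _ z

lemma abs_heatKernel_le (s : ℝ) (z : ℤ) : |heatKernel s z| ≤ heatKernel s 0 :=
  abs_cosCoeff_le_apply_zero (heatSymbol_nonneg s) z

/-- The discrete Laplacian on `ℤ`. -/
def intLaplacian : (ℤ →ᵇ ℝ) →L[ℝ] (ℤ →ᵇ ℝ) :=
  jumpGenerator (fun _ => (Finset.univ : Finset ℤˣ)) (fun ε z => z + ε) 2 fun _ => le_rfl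

lemma intLaplacian_apply (f : ℤ →ᵇ ℝ) (z : ℤ) :
    intLaplacian f z = ∑ ε : ℤˣ, (f (z + ε) - f z) := rfl

lemma intLaplacian_cosCoeff (f : ℝ →ᵇ ℝ) :
    intLaplacian (cosCoeff f) = (2 : ℝ) • cosCoeff (boundedCos * f - f) := by
  ext z
  have hsum : intLaplacian (cosCoeff f) z =
      (cosCoeff f (z + 1) - cosCoeff f z) + (cosCoeff f (z - 1) - cosCoeff f z) := by
    simp [intLaplacian_apply, UnitsInt.univ, sub_eq_add_neg]
  simp only [hsum, map_sub cosCoeff, BoundedContinuousFunction.coe_smul,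
    BoundedContinuousFunction.coe_sub, Pi.sub_apply, cosCoeff_boundedCos_mul, smul_eq_mul]
  ring

lemma hasDerivAt_heatKernel (s : ℝ) :
    HasDerivAt heatKernel ((2 : ℝ) • intLaplacian (heatKernel s)) s := by
  refine (cosCoeff.hasFDerivAt.comp_hasDerivAt s (hasDerivAt_heatSymbol s)).congr_deriv ?_
  rw [heatKernel, intLaplacian_cosCoeff, map_smul, smul_smul]
  norm_num

lemma heatKernel_zero_apply (z : ℤ) : heatKernel 0 z =
    (if z = 0 then 1 else 0) + ((if z + 1 = 0 then 1 else 0) + if z - 1 = 0 then 1 else 0) / 2 := by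
  rw [heatKernel, heatSymbol_zero, map_add, ← mul_one boundedCos,
    BoundedContinuousFunction.coe_add, Pi.add_apply, cosCoeff_boundedCos_mul]
  simp only [cosCoeff_one]

lemma heatKernel_zero_nonneg (z : ℤ) : 0 ≤ heatKernel 0 z := by
  rw [heatKernel_zero_apply]
  positivity

lemma heatKernel_apply_zero_le_one {s : ℝ} (hs : 0 ≤ s) : heatKernel s 0 ≤ 1 :=
  (cosCoeff_apply_zero_mono (heatSymbol_le_heatSymbol_zero hs)).trans_eq <| by
    simpa [heatKernel] using heatKernel_zero_apply 0

lemma intervalIntegral_exp_neg_mul_sq_le {b : ℝ} (hb : 0 < b) {r : ℝ} (hr : 0 ≤ r) :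
    ∫ θ in -r..r, exp (-b * θ ^ 2) ≤ √(π / b) := by
  rw [← integral_gaussian, intervalIntegral.integral_of_le (by linarith)]
  exact MeasureTheory.setIntegral_le_integral (integrable_exp_neg_mul_sq hb)
    (.of_forall fun _ => (exp_pos _).le)

lemma heatKernel_apply_zero_le_inv_sqrt {s : ℝ} (hs : 0 < s) : heatKernel s 0 ≤ 1 / √s := by
  have hpi := pi_pos
  have hgauss := cosCoeff_apply_zero_le_integral (f := heatSymbol s)
    (g := fun θ => 2 * exp (-(8 * s / π ^ 2) * θ ^ 2)) (by fun_prop)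
    fun θ hθ => heatSymbol_le_gaussian hs.le hθ
  have hsqrt : √(π / (8 * s / π ^ 2)) ≤ π / √s := by
    rw [← sqrt_sq hpi.le, ← sqrt_div (by positivity)]
    refine sqrt_le_sqrt ?_
    rw [sqrt_sq hpi.le, div_div_eq_mul_div, div_le_div_iff₀ (by positivity) hs]
    nlinarith [pi_le_four, mul_pos hs (pow_pos hpi 2)]
  calc heatKernel s 0 ≤ (2 * π)⁻¹ * ∫ θ in -π..π, 2 * exp (-(8 * s / π ^ 2) * θ ^ 2) := hgauss
    _ ≤ (2 * π)⁻¹ * (2 * (π / √s)) := by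
        rw [intervalIntegral.integral_const_mul]
        gcongr
        exact (intervalIntegral_exp_neg_mul_sq_le (by positivity) hpi.le).trans hsqrt
    _ = 1 / √s := by field_simp

lemma heatKernel_apply_zero_le {s : ℝ} (hs : 0 ≤ s) : heatKernel s 0 ≤ 2 / (√s + 1) := by
  rcases le_or_gt (√s) 1 with hs1 | hs1
  · refine (heatKernel_apply_zero_le_one hs).trans ?_
    rw [le_div_iff₀ (by positivity)]
    linarith
  · have hsqrt : 0 < √s := one_pos.trans hs1
    refine (heatKernel_apply_zero_le_inv_sqrt (sqrt_pos.1 hsqrt)).trans ?_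
    rw [div_le_div_iff₀ hsqrt (by positivity)]
    linarith

end HeatKernel

section LatticeHeatKernel

variable {d : ℕ}

/-- The product `z ↦ ∏ l, φₛ(z l)` of one-dimensional kernels `φₛ = heatKernel s`, which solves the
heat equation `∂ₛ h = 2 Δh` on `ℤ^d`. -/
def latticeHeatKernel (d : ℕ) (s : ℝ) : (Fin d → ℤ) →ᵇ ℝ :=
  ∏ l, (heatKernel s).compContinuousCLM ℝ ℝ ⟨fun z => z l, continuous_apply l⟩

lemma latticeHeatKernel_apply (s : ℝ) (z : Fin d → ℤ) :
    latticeHeatKernel d s z = ∏ l, heatKernel s (z l) := by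
  simp [latticeHeatKernel]

lemma latticeHeatKernel_add_unitStep (s : ℝ) (z : Fin d → ℤ) (l : Fin d) (ε : ℤˣ) :
    latticeHeatKernel d s (z + unitStep (l, ε)) =
      (∏ m ∈ Finset.univ.erase l, heatKernel s (z m)) * heatKernel s (z l + ε) := by
  rw [latticeHeatKernel_apply, ← Finset.prod_erase_mul _ _ (Finset.mem_univ l)]
  congr 1
  · refine Finset.prod_congr rfl fun m hm => ?_
    simp [unitStep, Finset.ne_of_mem_erase hm]
  · simp [unitStep]

lemma hasDerivAt_latticeHeatKernel (s : ℝ) :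
    HasDerivAt (latticeHeatKernel d) ((2 : ℝ) • latticeLaplacian d (latticeHeatKernel d s)) s := by
  refine (HasDerivAt.fun_finsetProd fun l _ =>
    ((BoundedContinuousFunction.compContinuousCLM ℝ ℝ _).hasFDerivAt.comp_hasDerivAt s
      (hasDerivAt_heatKernel s))).congr_deriv ?_
  ext z
  have hterm (l : Fin d) (ε : ℤˣ) :
      latticeHeatKernel d s (z + unitStep (l, ε)) - latticeHeatKernel d s z =
        (∏ m ∈ Finset.univ.erase l, heatKernel s (z m)) *
          (heatKernel s (z l + ε) - heatKernel s (z l)) := by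
    rw [latticeHeatKernel_add_unitStep, latticeHeatKernel_apply,
      ← Finset.prod_erase_mul _ _ (Finset.mem_univ l), mul_sub]
  simp [latticeLaplacian_apply, Fintype.sum_prod_type, hterm, ← Finset.mul_sum,
    intLaplacian_apply]

lemma latticeHeatKernel_neg (s : ℝ) (z : Fin d → ℤ) :
    latticeHeatKernel d s (-z) = latticeHeatKernel d s z := by
  simp [latticeHeatKernel_apply, heatKernel_neg]

lemma latticeHeatKernel_le_apply_zero (s : ℝ) (z : Fin d → ℤ) :
    latticeHeatKernel d s z ≤ latticeHeatKernel d s 0 := by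
  rw [latticeHeatKernel_apply, latticeHeatKernel_apply]
  refine (le_abs_self _).trans ?_
  rw [Finset.abs_prod]
  exact Finset.prod_le_prod (fun _ _ => abs_nonneg _) fun l _ => abs_heatKernel_le s (z l)

lemma latticeHeatKernel_le {s : ℝ} (hs : 0 ≤ s) (z : Fin d → ℤ) :
    latticeHeatKernel d s z ≤ 2 ^ d / (√s + 1) ^ d := by
  refine (latticeHeatKernel_le_apply_zero s z).trans ?_
  rw [latticeHeatKernel_apply, ← div_pow]
  simpa using pow_le_pow_left₀ ((abs_nonneg _).trans (abs_heatKernel_le s 0))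
    (heatKernel_apply_zero_le hs) d

lemma latticeHeatKernel_zero_nonneg : 0 ≤ latticeHeatKernel d 0 := fun z => by
  change 0 ≤ latticeHeatKernel d 0 z
  rw [latticeHeatKernel_apply]
  exact Finset.prod_nonneg fun l _ => heatKernel_zero_nonneg (z l)

lemma latticeHeatKernel_zero_apply_unitStep (a : Fin d × ℤˣ) :
    latticeHeatKernel d 0 (unitStep a) = 1 / 2 := by
  obtain ⟨l, ε⟩ := a
  have h := latticeHeatKernel_add_unitStep 0 0 l ε
  rw [zero_add] at h
  rw [h]
  rcases Int.units_eq_one_or ε with rfl | rfl <;> simp [heatKernel_zero_apply]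

lemma latticeHeatKernel_zero_apply_of_vnorm_eq_one {u v : Fin d → ℤ} (huv : vnorm (u - v) = 1) :
    latticeHeatKernel d 0 (u - v) = 1 / 2 := by
  obtain ⟨a, rfl⟩ := latticeGraph_adj_iff.1 huv
  rw [sub_add_cancel_left, latticeHeatKernel_neg, latticeHeatKernel_zero_apply_unitStep]

end LatticeHeatKernel

section PairComparison

variable {d k : ℕ}

/-- The function `x ↦ h (x i - x j)` of the configuration. -/
def pairDifference (d : ℕ) {k : ℕ} (i j : Fin k) :
    ((Fin d → ℤ) →ᵇ ℝ) →L[ℝ] (SSet d k →ᵇ ℝ) :=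
  BoundedContinuousFunction.compContinuousCLM ℝ ℝ
    ⟨fun x => x.1 i - x.1 j, continuous_of_discreteTopology⟩

lemma pairDifference_apply (i j : Fin k) (h : (Fin d → ℤ) →ᵇ ℝ) (x : SSet d k) :
    pairDifference d i j h x = h (x.1 i - x.1 j) := rfl

lemma exclusionGenerator_pairDifference_le {i j : Fin k} (hij : i ≠ j) {h : (Fin d → ℤ) →ᵇ ℝ}
    (hneg : ∀ z, h (-z) = h z) (hmax : ∀ z, h z ≤ h 0) :
    exclusionGenerator d k (pairDifference d i j h) ≤
      pairDifference d i j ((2 : ℝ) • latticeLaplacian d h) := by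
  intro x
  have hsymm (u v : Fin d → ℤ) : h (u - v) = h (v - u) := by rw [← neg_sub, hneg]
  have hpair := sum_occupiedEdges_pair (G := latticeGraph d) x.1 (x.2 i j hij)
    (H := fun u v => h (u - v)) hsymm
  rw [sum_neighborFinset_latticeGraph, sum_neighborFinset_latticeGraph] at hpair
  have hfirst : ∑ a, (h (x.1 i + unitStep a - x.1 j) - h (x.1 i - x.1 j)) =
      latticeLaplacian d h (x.1 i - x.1 j) := by
    simp only [add_sub_right_comm, latticeLaplacian_apply]
  have hsecond : ∑ a, (h (x.1 i - (x.1 j + unitStep a)) - h (x.1 i - x.1 j)) =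
      latticeLaplacian d h (x.1 i - x.1 j) := by
    rw [latticeLaplacian_apply,
      sum_add_unitStep_eq_sum_sub_unitStep fun w => h w - h (x.1 i - x.1 j)]
    simp only [sub_add_eq_sub_sub]
  have hdefect : (if (latticeGraph d).Adj (x.1 i) (x.1 j) then
      2 * h (x.1 i - x.1 j) - h (x.1 i - x.1 i) - h (x.1 j - x.1 j) else 0) ≤ 0 := by
    split_ifs
    · rw [sub_self, sub_self]
      linarith [hmax (x.1 i - x.1 j)]
    · exact le_rfl
  calc exclusionGenerator d k (pairDifference d i j h) x
      = _ := hpair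
    _ ≤ 2 * latticeLaplacian d h (x.1 i - x.1 j) := by
      rw [hfirst, hsecond]
      linarith

lemma semigroup_pairDifference_le {i j : Fin k} (hij : i ≠ j) {t : ℝ} (ht : 0 ≤ t)
    (x : SSet d k) :
    semigroup (exclusionGenerator d k) t (pairDifference d i j (latticeHeatKernel d 0)) x ≤
      2 ^ d / (√t + 1) ^ d := by
  refine (semigroup_apply_le_of_hasDerivAt (ℓ := BoundedContinuousFunction.evalCLM ℝ x)
    (F := fun s => pairDifference d i j (latticeHeatKernel d s))
    (fun t ht f hf => semigroup_exclusionGenerator_nonneg ht hf x)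
    (fun s => (pairDifference d i j).hasFDerivAt.comp_hasDerivAt s (hasDerivAt_latticeHeatKernel s))
    (fun s => exclusionGenerator_pairDifference_le hij (latticeHeatKernel_neg s)
      (latticeHeatKernel_le_apply_zero s)) ht).trans ?_
  exact latticeHeatKernel_le ht _

/-- A bounded function dominating the number of adjacent pairs of particles. The factor `2` is the
inverse of the value of `latticeHeatKernel d 0` at the neighbours of the origin. -/
def collisionMajorant (d k : ℕ) : SSet d k →ᵇ ℝ :=
  ∑ i : Fin k, ∑ j ∈ Finset.Ioi i, (2 : ℝ) • pairDifference d i j (latticeHeatKernel d 0)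

lemma sum_ite_adjacent_le_collisionMajorant :
    (fun w : SSet d k => ∑ i : Fin k, ∑ j : Fin k,
      if i < j ∧ vnorm (w.1 i - w.1 j) = 1 then (1 : ℝ) else 0) ≤ collisionMajorant d k := by
  intro w
  simp only [collisionMajorant, BoundedContinuousFunction.coe_sum, Finset.sum_apply,
    BoundedContinuousFunction.coe_smul, pairDifference_apply, smul_eq_mul]
  refine Finset.sum_le_sum fun i _ => ?_
  rw [← Finset.filter_lt_eq_Ioi, Finset.sum_filter]
  refine Finset.sum_le_sum fun j _ => ?_
  simp only [ite_and]
  have hnonneg : 0 ≤ latticeHeatKernel d 0 (w.1 i - w.1 j) := latticeHeatKernel_zero_nonneg _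
  split_ifs with hij hadj
  · rw [latticeHeatKernel_zero_apply_of_vnorm_eq_one hadj]
    norm_num
  · positivity
  · exact le_rfl

lemma sum_card_Ioi_fin (k : ℕ) : ∑ i : Fin k, (Finset.Ioi i).card = k.choose 2 := by
  simp only [Fin.card_Ioi]
  rw [← Finset.sum_range fun i => k - 1 - i, Finset.sum_range_reflect (fun i => i),
    Finset.sum_range_id, Nat.choose_two_right]

lemma semigroup_collisionMajorant_le {t : ℝ} (ht : 0 ≤ t) (x : SSet d k) :
    semigroup (exclusionGenerator d k) t (collisionMajorant d k) x ≤
      k.choose 2 * 2 ^ (d + 1) / (√t + 1) ^ d := by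
  simp only [collisionMajorant, map_sum, map_smul, BoundedContinuousFunction.coe_sum,
    Finset.sum_apply, BoundedContinuousFunction.coe_smul, smul_eq_mul]
  calc ∑ i, ∑ j ∈ Finset.Ioi i, 2 *
        semigroup (exclusionGenerator d k) t (pairDifference d i j (latticeHeatKernel d 0)) x
      ≤ ∑ i : Fin k, ∑ _j ∈ Finset.Ioi i, 2 * ((2 : ℝ) ^ d / (√t + 1) ^ d) := by
        gcongr with i _ j hj
        exact semigroup_pairDifference_le (Finset.mem_Ioi.1 hj).ne ht x
    _ = k.choose 2 * 2 ^ (d + 1) / (√t + 1) ^ d := by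
        simp only [Finset.sum_const, nsmul_eq_mul, ← Finset.sum_mul, ← Nat.cast_sum,
          sum_card_Ioi_fin]
        ring

end PairComparison

/-- Lemma (collision estimate): for integers `d ≥ 1`, `k ≥ 2` there is a constant `C = C(k,d)`
such that for every `x ∈ 𝕊^k` and `t ≥ 0`,
`Σ_{w ∈ 𝕊^k} p_t^ℓ(x,w) Σ_{1 ≤ i < j ≤ k} 1{‖w_i − w_j‖ = 1} ≤ C / (√t + 1)^d`. -/
theorem collision_bound (d k : ℕ) (hd : 1 ≤ d) (hk : 2 ≤ k) :
    ∃ C : ℝ, 0 < C ∧ ∀ x : Conf d k, x ∈ SSet d k → ∀ t : ℝ, 0 ≤ t →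
      Summable (fun w : SSet d k => ptl t x w.val *
        ∑ i : Fin k, ∑ j : Fin k,
          if i < j ∧ vnorm (w.val i - w.val j) = 1 then (1 : ℝ) else 0) ∧
      (∑' w : SSet d k, ptl t x w.val *
        ∑ i : Fin k, ∑ j : Fin k,
          if i < j ∧ vnorm (w.val i - w.val j) = 1 then (1 : ℝ) else 0) ≤
        C / (Real.sqrt t + 1) ^ d := by
  refine ⟨k.choose 2 * 2 ^ (d + 1), by have := Nat.choose_pos hk; positivity, fun x hx t ht => ?_⟩
  let transition : (SSet d k →ᵇ ℝ) →L[ℝ] ℝ :=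
    (BoundedContinuousFunction.evalCLM ℝ ⟨x, hx⟩).comp (semigroup (exclusionGenerator d k) t)
  have hptl (w : SSet d k) : ptl t x w.1 = transition (pointMass w) :=
    ptl_eq_semigroup_apply t ⟨x, hx⟩ w
  simp only [hptl]
  have hcount := summable_and_tsum_pointMass_le (ℓ := transition)
    (fun f hf => semigroup_exclusionGenerator_nonneg ht hf ⟨x, hx⟩)
    (fun w => by positivity) sum_ite_adjacent_le_collisionMajorant
  exact hcount.imp_right fun h => h.trans (semigroup_collisionMajorant_le ht ⟨x, hx⟩)

end SSEPPaper
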